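/- Let d = 2. For every integer n ≥ 1, a(n,1) = (2n−1) · a(n−1,0) + a(n−1,1). -/

import Mathlib

/-- A generalized linear diagram on points `1,…,N` whose blocks all have size `d`:
a partition of `{1,…,N}` into blocks of size `d`. -/
def IsLinearDiagram (N d : ℕ) (P : Finset (Finset ℕ)) : Prop :=
  (∀ b ∈ P, b.card = d) ∧ (∀ b ∈ P, ∀ x ∈ b, x ∈ Finset.Icc 1 N) ∧
    ∀ x ∈ Finset.Icc 1 N, ∃! b : Finset ℕ, b ∈ P ∧ x ∈ b

/-- The number of loops of a linear diagram on points `1,…,N`: indices `i` with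
`1 ≤ i ≤ N - 1` such that `i` and `i + 1` lie in the same block. -/
noncomputable def linLoops (N : ℕ) (P : Finset (Finset ℕ)) : ℕ :=
  Set.ncard {i : ℕ | 1 ≤ i ∧ i + 1 ≤ N ∧ ∃ b ∈ P, i ∈ b ∧ i + 1 ∈ b}

/-- `numA d n k` : the number of generalized linear diagrams of order `(n,d)`
with exactly `k` loops. -/
noncomputable def numA (d n k : ℕ) : ℕ :=
  Set.ncard {P : Finset (Finset ℕ) | IsLinearDiagram (n * d) d P ∧ linLoops (n * d) P = k}

/-- `numA` with an integer loop index, zero for negative indices. -/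
noncomputable def numAZ (d n : ℕ) (k : ℤ) : ℕ :=
  if 0 ≤ k then numA d n k.toNat else 0

/-- Binomial coefficient with integer arguments: `0` when `y < 0` or `y > x`. -/
def iChoose (x y : ℤ) : ℕ :=
  if 0 ≤ y ∧ y ≤ x then x.toNat.choose y.toNat else 0

/-- A generalized chord diagram on `ZMod N` whose blocks all have size `d`:
a partition of `ZMod N` into blocks of size `d`. -/
def IsChordDiagram (N d : ℕ) (P : Finset (Finset (ZMod N))) : Prop :=
  (∀ b ∈ P, b.card = d) ∧ ∀ x : ZMod N, ∃! b : Finset (ZMod N), b ∈ P ∧ x ∈ b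

/-- A chord diagram is loopless if no residues `i`, `i+1` lie in the same block. -/
def ChordLoopless (N : ℕ) (P : Finset (Finset (ZMod N))) : Prop :=
  ∀ i : ZMod N, ∀ b ∈ P, i ∈ b → i + 1 ∈ b → False

/-- `numB d n` : the number of loopless generalized chord diagrams of order `(n,d)`. -/
noncomputable def numB (d n : ℕ) : ℕ :=
  Set.ncard {P : Finset (Finset (ZMod (n * d))) |
    IsChordDiagram (n * d) d P ∧ ChordLoopless (n * d) P}

/-- The shift `i ↦ i + v` modulo `M`, on the representatives `1,…,M`. -/
def shiftMod (M v i : ℕ) : ℕ := if i + v ≤ M then i + v else i + v - M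

/-- An `m`-symmetric linear diagram with sector size `v` and blocks of size `d`:
a partition of `{1,…,m·v}` into blocks of size `d` invariant under the shift by `v`
modulo `m·v`. -/
def IsMSymLinear (d m v : ℕ) (P : Finset (Finset ℕ)) : Prop :=
  IsLinearDiagram (m * v) d P ∧ ∀ b ∈ P, b.image (shiftMod (m * v) v) ∈ P

/-- The number of loops lying in sector `s` (sectors numbered from `0`):
indices `i` with `s·v + 1 ≤ i ≤ (s+1)·v - 1` such that `i` and `i + 1` lie
in the same block. -/
noncomputable def sectorLoops (v : ℕ) (P : Finset (Finset ℕ)) (s : ℕ) : ℕ :=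
  Set.ncard {i : ℕ | s * v + 1 ≤ i ∧ i + 1 ≤ (s + 1) * v ∧ ∃ b ∈ P, i ∈ b ∧ i + 1 ∈ b}

/-- `numAtil d m v k` : the number of `m`-symmetric linear diagrams with sector size `v`,
blocks of size `d`, and exactly `k` loops in each sector (`ã(v,k;m,d)`). -/
noncomputable def numAtil (d m v k : ℕ) : ℕ :=
  Set.ncard {P : Finset (Finset ℕ) |
    IsMSymLinear d m v P ∧ ∀ s < m, sectorLoops v P s = k}

/-!
Count in two ways the pairs of a diagram of order `n + 1` with `k + 1` loops and one of its loops.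
For `d = 2` a loop `(i + 1, i + 2)` is a whole block; deleting it leaves an arbitrary diagram `Q` of
order `n` together with one of its `2n + 1` gaps `i`. Reinserting the block creates one loop and
destroys at most one, namely the loop `(i, i + 1)` of `Q`. So either `Q` has `k` loops and the gap
is one of the `2n + 1 - k` gaps that are not loops, or `Q` has `k + 1` loops and the gap is one of
them.
-/

open Finset

section DoubleCounting

variable {α β : Type*} [DecidableEq β]

lemma card_filter_card_erase_eq (A : Finset α) (f : α → Finset β) (i : β) (k : ℕ) :
    #{a ∈ A | #((f a).erase i) = k} =
      #{a ∈ A | #(f a) = k ∧ i ∉ f a} + #{a ∈ A | #(f a) = k + 1 ∧ i ∈ f a} := by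
  classical
  rw [← card_union_of_disjoint (disjoint_filter.2 fun a _ h h' => h.2 h'.2), ← filter_or]
  congr 1
  refine filter_congr fun a _ => ?_
  by_cases hi : i ∈ f a
  · simp only [hi, not_true, and_false, and_true, false_or]
    rw [← card_erase_add_one hi, Nat.add_right_cancel_iff]
  · simp [hi]

lemma sum_card_filter_mem {A : Finset α} {f : α → Finset β} {s : Finset β}
    (hs : ∀ a ∈ A, f a ⊆ s) : ∑ i ∈ s, #{a ∈ A | i ∈ f a} = ∑ a ∈ A, #(f a) := by
  calc ∑ i ∈ s, #{a ∈ A | i ∈ f a}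
    _ = ∑ a ∈ A, #{i ∈ s | i ∈ f a} :=
      sum_card_bipartiteAbove_eq_sum_card_bipartiteBelow fun i a => i ∈ f a
    _ = ∑ a ∈ A, #(f a) := sum_congr rfl fun a ha => by
      rw [filter_mem_eq_inter, inter_eq_right.2 (hs a ha)]

lemma sum_card_filter_notMem {A : Finset α} {f : α → Finset β} {s : Finset β}
    (hs : ∀ a ∈ A, f a ⊆ s) : ∑ i ∈ s, #{a ∈ A | i ∉ f a} = ∑ a ∈ A, (#s - #(f a)) := by
  calc ∑ i ∈ s, #{a ∈ A | i ∉ f a}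
    _ = ∑ i ∈ s, #{a ∈ A | i ∈ s \ f a} := sum_congr rfl fun i hi => by
      simp only [mem_sdiff, hi, true_and]
    _ = ∑ a ∈ A, #(s \ f a) := sum_card_filter_mem fun _ _ => sdiff_subset
    _ = ∑ a ∈ A, (#s - #(f a)) := sum_congr rfl fun a ha => card_sdiff_of_subset (hs a ha)

end DoubleCounting

/-- The increasing relabelling that leaves room for `d` new points `i + 1, …, i + d`. -/
def shiftPast (d i : ℕ) : ℕ ↪ ℕ where
  toFun x := if x ≤ i then x else x + d
  inj' x y h := by grind

lemma shiftPast_apply (d i x : ℕ) : shiftPast d i x = if x ≤ i then x else x + d := rfl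

lemma shiftPast_notMem_Icc (d i x : ℕ) : shiftPast d i x ∉ Icc (i + 1) (i + d) := by
  grind [shiftPast_apply]

lemma exists_shiftPast_eq {d i x : ℕ} (hx : x ∉ Icc (i + 1) (i + d)) :
    ∃ y, shiftPast d i y = x := by
  by_cases hxi : x ≤ i
  · exact ⟨x, if_pos hxi⟩
  · exact ⟨x - d, by grind [shiftPast_apply]⟩

lemma shiftPast_mem_Icc_iff {N d i : ℕ} (hi : i ≤ N) (x : ℕ) :
    shiftPast d i x ∈ Icc 1 (N + d) ↔ x ∈ Icc 1 N := by
  grind [shiftPast_apply]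

lemma shiftPast_eq_shiftPast_add_one_iff {d i x y : ℕ} (hd : 0 < d) :
    shiftPast d i y = shiftPast d i x + 1 ↔ y = x + 1 ∧ x ≠ i := by
  grind [shiftPast_apply]

/-- The diagram obtained from `Q` by inserting, right after the point `i`, a new block consisting
of `d` consecutive points. -/
def insertBlock (d i : ℕ) (Q : Finset (Finset ℕ)) : Finset (Finset ℕ) :=
  insert (Icc (i + 1) (i + d)) (Q.image (Finset.map (shiftPast d i)))

lemma map_shiftPast_ne_Icc {d : ℕ} (hd : 0 < d) (i : ℕ) (c : Finset ℕ) :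
    c.map (shiftPast d i) ≠ Icc (i + 1) (i + d) := by
  intro h
  have hmem : i + 1 ∈ c.map (shiftPast d i) := h ▸ mem_Icc.2 ⟨le_rfl, by omega⟩
  obtain ⟨x, -, hx⟩ := mem_map.1 hmem
  exact shiftPast_notMem_Icc d i x (hx ▸ mem_Icc.2 ⟨le_rfl, by omega⟩)

lemma map_shiftPast_mem_insertBlock {d : ℕ} (hd : 0 < d) {i : ℕ} {c : Finset ℕ}
    {Q : Finset (Finset ℕ)} : c.map (shiftPast d i) ∈ insertBlock d i Q ↔ c ∈ Q := by
  rw [insertBlock, mem_insert, or_iff_right (map_shiftPast_ne_Icc hd i c),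
    (map_injective _).mem_finset_image]

lemma insertBlock_injective {d : ℕ} (hd : 0 < d) (i : ℕ) :
    Function.Injective (insertBlock d i) := by
  intro Q R h
  ext c
  rw [← map_shiftPast_mem_insertBlock hd, h, map_shiftPast_mem_insertBlock hd]

lemma existsUnique_mem_insertBlock_of_mem_Icc {d i x : ℕ} (hx : x ∈ Icc (i + 1) (i + d))
    (Q : Finset (Finset ℕ)) : ∃! b, b ∈ insertBlock d i Q ∧ x ∈ b := by
  refine ⟨Icc (i + 1) (i + d), ⟨mem_insert_self _ _, hx⟩, ?_⟩
  rintro b ⟨hb, hxb⟩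
  refine (mem_insert.1 hb).resolve_right fun hb' => ?_
  obtain ⟨c, -, rfl⟩ := mem_image.1 hb'
  obtain ⟨y, -, rfl⟩ := mem_map.1 hxb
  exact shiftPast_notMem_Icc d i y hx

lemma existsUnique_shiftPast_mem_insertBlock_iff {d i x : ℕ} {Q : Finset (Finset ℕ)} :
    (∃! b, b ∈ insertBlock d i Q ∧ shiftPast d i x ∈ b) ↔ ∃! c, c ∈ Q ∧ x ∈ c := by
  have hblocks (b : Finset ℕ) : b ∈ insertBlock d i Q ∧ shiftPast d i x ∈ b ↔
      ∃ c, (c ∈ Q ∧ x ∈ c) ∧ c.map (shiftPast d i) = b := by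
    grind [insertBlock, shiftPast_notMem_Icc]
  have hinj := map_injective (shiftPast d i)
  simp only [hblocks]
  constructor
  · rintro ⟨_, ⟨c, hc, rfl⟩, huniq⟩
    exact ⟨c, hc, fun e he => hinj (huniq _ ⟨e, he, rfl⟩)⟩
  · rintro ⟨c, hc, huniq⟩
    refine ⟨_, ⟨c, hc, rfl⟩, ?_⟩
    rintro _ ⟨e, he, rfl⟩
    rw [huniq e he]

theorem isLinearDiagram_insertBlock_iff {N d i : ℕ} (hi : i ≤ N) {Q : Finset (Finset ℕ)} :
    IsLinearDiagram (N + d) d (insertBlock d i Q) ↔ IsLinearDiagram N d Q := by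
  refine and_congr ?card (and_congr ?support ?cover)
  case card => simp [insertBlock]
  case support =>
    have hnew : ∀ x ∈ Icc (i + 1) (i + d), x ∈ Icc 1 (N + d) := by grind
    simp only [insertBlock, forall_mem_insert, forall_mem_image, forall_mem_map,
      shiftPast_mem_Icc_iff hi, and_iff_right hnew]
  case cover =>
    constructor
    · intro h x hx
      exact existsUnique_shiftPast_mem_insertBlock_iff.1
        (h _ ((shiftPast_mem_Icc_iff hi x).2 hx))
    · intro h x hx
      by_cases hnew : x ∈ Icc (i + 1) (i + d)
      · exact existsUnique_mem_insertBlock_of_mem_Icc hnew Q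
      · obtain ⟨y, rfl⟩ := exists_shiftPast_eq hnew
        exact existsUnique_shiftPast_mem_insertBlock_iff.2
          (h y ((shiftPast_mem_Icc_iff hi y).1 hx))

lemma IsLinearDiagram.eq_of_mem {N d x : ℕ} {P : Finset (Finset ℕ)} (hP : IsLinearDiagram N d P)
    {b c : Finset ℕ} (hb : b ∈ P) (hc : c ∈ P) (hxb : x ∈ b) (hxc : x ∈ c) : b = c :=
  (hP.2.2 x (hP.2.1 b hb x hxb)).unique ⟨hb, hxb⟩ ⟨hc, hxc⟩

lemma exists_map_shiftPast_eq {d i : ℕ} {b : Finset ℕ} (hb : Disjoint b (Icc (i + 1) (i + d))) :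
    ∃ c : Finset ℕ, c.map (shiftPast d i) = b := by
  have hrange : (b : Set ℕ) ⊆ shiftPast d i '' Set.univ := fun x hx => by
    obtain ⟨y, hy⟩ := exists_shiftPast_eq (Finset.disjoint_left.1 hb hx)
    exact ⟨y, trivial, hy⟩
  obtain ⟨c, -, hc⟩ := subset_set_image_iff.1 hrange
  exact ⟨c, by rw [map_eq_image, hc]⟩

theorem IsLinearDiagram.exists_insertBlock_eq {N d i : ℕ} {P : Finset (Finset ℕ)}
    (hP : IsLinearDiagram N d P) (hi : Icc (i + 1) (i + d) ∈ P) :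
    ∃ Q, insertBlock d i Q = P := by
  have hrange : ((P.erase (Icc (i + 1) (i + d)) : Finset _) : Set (Finset ℕ)) ⊆
      Finset.map (shiftPast d i) '' Set.univ := by
    intro b hb
    obtain ⟨hne, hbP⟩ := mem_erase.1 hb
    obtain ⟨c, hc⟩ := exists_map_shiftPast_eq <| Finset.disjoint_left.2 fun x hxb hxi =>
      hne (hP.eq_of_mem hbP hi hxb hxi)
    exact ⟨c, trivial, hc⟩
  obtain ⟨Q, -, hQ⟩ := subset_set_image_iff.1 hrange
  exact ⟨Q, by rw [insertBlock, hQ, insert_erase hi]⟩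

/-- The set of loops of `P`, so that `linLoops N P` is its cardinality. -/
def loopFinset (N : ℕ) (P : Finset (Finset ℕ)) : Finset ℕ :=
  {j ∈ Ico 1 N | ∃ b ∈ P, j ∈ b ∧ j + 1 ∈ b}

lemma linLoops_eq_card_loopFinset (N : ℕ) (P : Finset (Finset ℕ)) :
    linLoops N P = #(loopFinset N P) := by
  rw [linLoops, ← Set.ncard_coe_finset]
  congr 1
  ext j
  simp [loopFinset, Nat.succ_le_iff, and_assoc]

lemma mem_loopFinset {N j : ℕ} {P : Finset (Finset ℕ)} :
    j ∈ loopFinset N P ↔ j ∈ Ico 1 N ∧ ∃ b ∈ P, j ∈ b ∧ j + 1 ∈ b := mem_filter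

lemma loopFinset_subset_Ico (N : ℕ) (P : Finset (Finset ℕ)) : loopFinset N P ⊆ Ico 1 N :=
  filter_subset _ _

theorem loopFinset_insertBlock {N d i : ℕ} (hd : 0 < d) (hi : i ≤ N) (Q : Finset (Finset ℕ)) :
    loopFinset (N + d) (insertBlock d i Q) =
      Ico (i + 1) (i + d) ∪ ((loopFinset N Q).erase i).map (shiftPast d i) := by
  ext j
  by_cases hj : j ∈ Icc (i + 1) (i + d)
  · have hnew : j + 1 ∈ Icc (i + 1) (i + d) ↔ j ∈ Ico (i + 1) (i + d) := by grind
    have hbound : j ∈ Ico (i + 1) (i + d) → j ∈ Ico 1 (N + d) := by grind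
    have hold (c : Finset ℕ) : j ∉ c.map (shiftPast d i) := by
      grind [shiftPast_notMem_Icc]
    simp only [mem_loopFinset, insertBlock, exists_mem_insert, exists_mem_image, hj, hnew, hold,
      mem_union, true_and, false_and, and_false, exists_false, or_false,
      and_iff_right_of_imp hbound]
  · obtain ⟨x, rfl⟩ := exists_shiftPast_eq hj
    have hnotIco : shiftPast d i x ∉ Ico (i + 1) (i + d) := by grind
    have hbound : x ≠ i → (shiftPast d i x ∈ Ico 1 (N + d) ↔ x ∈ Ico 1 N) := by
      grind [shiftPast_apply]
    have hold (c : Finset ℕ) : shiftPast d i x + 1 ∈ c.map (shiftPast d i) ↔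
        x + 1 ∈ c ∧ x ≠ i := by
      simp only [mem_map, shiftPast_eq_shiftPast_add_one_iff hd]
      grind
    simp only [mem_loopFinset, insertBlock, exists_mem_insert, exists_mem_image, hj, hold,
      hnotIco, mem_union, false_and, false_or, mem_map', mem_erase]
    grind

lemma card_loopFinset_insertBlock {N d i : ℕ} (hd : 0 < d) (hi : i ≤ N)
    (Q : Finset (Finset ℕ)) :
    #(loopFinset (N + d) (insertBlock d i Q)) = #((loopFinset N Q).erase i) + (d - 1) := by
  have hdisj : Disjoint (Ico (i + 1) (i + d)) (((loopFinset N Q).erase i).map (shiftPast d i)) :=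
    Finset.disjoint_right.2 <| forall_mem_map.2 fun x _ hx =>
      shiftPast_notMem_Icc d i x (Ico_subset_Icc_self hx)
  rw [loopFinset_insertBlock hd hi, card_union_of_disjoint hdisj, card_map, Nat.card_Ico]
  omega

lemma IsLinearDiagram.Icc_mem_iff_mem_loopFinset {N i : ℕ} {P : Finset (Finset ℕ)}
    (hP : IsLinearDiagram N 2 P) : Icc (i + 1) (i + 2) ∈ P ↔ i + 1 ∈ loopFinset N P := by
  have hpair : Icc (i + 1) (i + 2) = {i + 1, i + 2} := by grind
  rw [mem_loopFinset, hpair]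
  constructor
  · intro h
    have hbound := mem_Icc.1 (hP.2.1 _ h (i + 2) (by simp))
    exact ⟨mem_Ico.2 ⟨by omega, by omega⟩, _, h, by simp, by simp⟩
  · rintro ⟨-, b, hb, h₁, h₂⟩
    have hsub : {i + 1, i + 2} ⊆ b := by grind
    rwa [eq_of_subset_of_card_le hsub (by simp [hP.1 b hb])]

open scoped Classical in
/-- The finite set of linear diagrams on `1, …, N` with blocks of size `d`. -/
noncomputable def linearDiagrams (N d : ℕ) : Finset (Finset (Finset ℕ)) :=
  {P ∈ (Icc 1 N).powerset.powerset | IsLinearDiagram N d P}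

lemma mem_linearDiagrams {N d : ℕ} {P : Finset (Finset ℕ)} :
    P ∈ linearDiagrams N d ↔ IsLinearDiagram N d P := by
  classical
  refine mem_filter.trans (and_iff_right_of_imp fun hP => ?_)
  exact mem_powerset.2 fun b hb => mem_powerset.2 (hP.2.1 b hb)

lemma numA_eq_card (d n k : ℕ) :
    numA d n k = #{P ∈ linearDiagrams (n * d) d | #(loopFinset (n * d) P) = k} := by
  rw [numA, ← Set.ncard_coe_finset]
  congr 1
  ext P
  simp [mem_linearDiagrams, linLoops_eq_card_loopFinset]

theorem card_linearDiagrams_filter_Icc_mem {N d i : ℕ} (hd : 0 < d) (hi : i ≤ N) (k : ℕ) :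
    #{P ∈ linearDiagrams (N + d) d |
      #(loopFinset (N + d) P) = k + (d - 1) ∧ Icc (i + 1) (i + d) ∈ P} =
    #{Q ∈ linearDiagrams N d | #((loopFinset N Q).erase i) = k} := by
  refine (congrArg card ?_).trans (card_image_of_injective _ (insertBlock_injective hd i))
  ext P
  simp only [mem_filter, mem_image, mem_linearDiagrams]
  constructor
  · rintro ⟨hP, hk, hiP⟩
    obtain ⟨Q, rfl⟩ := hP.exists_insertBlock_eq hiP
    rw [card_loopFinset_insertBlock hd hi, Nat.add_right_cancel_iff] at hk
    exact ⟨Q, ⟨(isLinearDiagram_insertBlock_iff hi).1 hP, hk⟩, rfl⟩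
  · rintro ⟨Q, ⟨hQ, hk⟩, rfl⟩
    exact ⟨(isLinearDiagram_insertBlock_iff hi).2 hQ,
      by rw [card_loopFinset_insertBlock hd hi, hk], mem_insert_self _ _⟩

lemma card_linearDiagrams_filter_loop {N i : ℕ} (hi : i ≤ N) (k : ℕ) :
    #{P ∈ linearDiagrams (N + 2) 2 |
      #(loopFinset (N + 2) P) = k + 1 ∧ i + 1 ∈ loopFinset (N + 2) P} =
    #{Q ∈ linearDiagrams N 2 | #(loopFinset N Q) = k ∧ i ∉ loopFinset N Q} +
      #{Q ∈ linearDiagrams N 2 | #(loopFinset N Q) = k + 1 ∧ i ∈ loopFinset N Q} := by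
  rw [← card_filter_card_erase_eq, ← card_linearDiagrams_filter_Icc_mem two_pos hi]
  congr 1
  refine filter_congr fun P hP => and_congr_right' ?_
  rw [(mem_linearDiagrams.1 hP).Icc_mem_iff_mem_loopFinset]

lemma sum_card_filter_loop {N : ℕ} (d k : ℕ) {s : Finset ℕ} (hs : Ico 1 N ⊆ s) :
    ∑ i ∈ s, #{P ∈ linearDiagrams N d | #(loopFinset N P) = k ∧ i ∈ loopFinset N P} =
      k * #{P ∈ linearDiagrams N d | #(loopFinset N P) = k} := by
  simp only [← filter_filter]
  rw [sum_card_filter_mem fun P _ => (loopFinset_subset_Ico N P).trans hs,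
    sum_const_nat fun P hP => by rw [(mem_filter.1 hP).2], mul_comm]

lemma sum_card_filter_not_loop {N : ℕ} (d k : ℕ) {s : Finset ℕ} (hs : Ico 1 N ⊆ s) :
    ∑ i ∈ s, #{P ∈ linearDiagrams N d | #(loopFinset N P) = k ∧ i ∉ loopFinset N P} =
      (#s - k) * #{P ∈ linearDiagrams N d | #(loopFinset N P) = k} := by
  simp only [← filter_filter]
  rw [sum_card_filter_notMem fun P _ => (loopFinset_subset_Ico N P).trans hs,
    sum_const_nat fun P hP => by rw [(mem_filter.1 hP).2], mul_comm]

/-- The subtraction truncates only when `n < k`, where `numA 2 n k = 0`. -/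
theorem linear_rec_two_one_general (n k : ℕ) :
    (k + 1) * numA 2 (n + 1) (k + 1) =
      (2 * n + 1 - k) * numA 2 n k + (k + 1) * numA 2 n (k + 1) := by
  simp only [numA_eq_card, Nat.add_one_mul n 2, mul_comm 2 n]
  generalize n * 2 = N
  have hsub : Ico 1 N ⊆ Ico 0 (N + 1) := Ico_subset_Ico (by omega) (by omega)
  have hnotLoop := sum_card_filter_not_loop 2 k hsub
  rw [Nat.card_Ico, Nat.sub_zero] at hnotLoop
  rw [← hnotLoop, ← sum_card_filter_loop 2 (k + 1) subset_rfl,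
    ← sum_card_filter_loop 2 (k + 1) hsub, ← sum_Ico_add' _ 0 (N + 1) 1, ← sum_add_distrib]
  exact sum_congr rfl fun i hi =>
    card_linearDiagrams_filter_loop (Nat.lt_succ_iff.1 (mem_Ico.1 hi).2) k

/-- for `d = 2` and `n ≥ 1`, `a(n,1) = (2n−1)·a(n−1,0) + a(n−1,1)`. -/
theorem linear_rec_two_one (n : ℕ) (hn : 1 ≤ n) :
    numA 2 n 1 = (2 * n - 1) * numA 2 (n - 1) 0 + numA 2 (n - 1) 1 := by
  obtain ⟨m, rfl⟩ := Nat.exists_eq_add_of_le' hn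
  simpa [Nat.mul_add] using linear_rec_two_one_general m 0
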